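/- Let H and F be graphs with chromatic numbers r+1 and s+1 respectively, where r > s ≥ 1. If F is a complete (s+1)-partite graph, then the induced Turán number ex(n, {H, F-ind}) equals (1 - 1/s + o(1))·C(n,2) as n → ∞; that is, ex(n, {H, F-ind}) / C(n,2) → 1 - 1/s as n → ∞. -/

import Mathlib

open SimpleGraph Filter

/-- `G` contains a (not necessarily induced) copy of `H`: an injective graph homomorphism. -/
def ContainsCopy {α β : Type*} (H : SimpleGraph α) (G : SimpleGraph β) : Prop :=
  ∃ f : H →g G, Function.Injective f

/-- `G` contains an induced copy of `F`: a graph embedding. -/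
def ContainsInducedCopy {α β : Type*} (F : SimpleGraph α) (G : SimpleGraph β) : Prop :=
  Nonempty (F ↪g G)

/-- The induced Turán number `ex(n, {H, F-ind})`: the maximum number of edges in an
`n`-vertex graph with no copy of `H` and no induced copy of `F`. -/
noncomputable def inducedTuranNumber {α β : Type*} (H : SimpleGraph α) (F : SimpleGraph β)
    (n : ℕ) : ℕ :=
  sSup {m | ∃ G : SimpleGraph (Fin n),
    ¬ ContainsCopy H G ∧ ¬ ContainsInducedCopy F G ∧ m = G.edgeSet.ncard}

/-- A graph is complete multipartite if its vertices can be assigned to parts so that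
two vertices are adjacent iff they lie in different parts. -/
def IsCompleteMultipartite {α : Type*} (G : SimpleGraph α) : Prop :=
  ∃ (ι : Type) (f : α → ι), ∀ a b, G.Adj a b ↔ f a ≠ f b

/-- A graph is complete `k`-partite if its vertices can be partitioned into `k` (nonempty)
parts so that two vertices are adjacent iff they lie in different parts. -/
def IsCompleteMultipartiteWith {α : Type*} (G : SimpleGraph α) (k : ℕ) : Prop :=
  ∃ f : α → Fin k, Function.Surjective f ∧ ∀ a b, G.Adj a b ↔ f a ≠ f b

/-!
The Turán graph with `s` parts is `s`-colorable, so it contains neither `H` nor `F`, and it has at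
least `(1 - 1/s) * C(n,2)` edges. For the upper bound, let `G` contain `K_{s+1}(t)` with `t` large.
By Ramsey's theorem each part of this copy contains either a clique on `|H|` vertices, and hence a
copy of `H`, or an independent set of size `|F|`. If all `s + 1` parts contain such an independent
set, these sets induce a complete `(s+1)`-partite graph, in which `F` embeds as an induced subgraph.
So every graph counted by `ex(n, {H, F-ind})` is `K_{s+1}(t)`-free, and the Erdős–Stone theorem
applies; its minimum-degree form bounds the Turán density by deleting vertices of minimum
degree one at a time.
-/

open scoped Finset Topology

section Ramsey

variable {V : Type*}

theorem exists_isNClique_or_isNIndepSet_of_choose_le_card (G : SimpleGraph V) {a b : ℕ}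
    {S : Finset V} (hS : (a + b).choose a ≤ #S) :
    (∃ T ⊆ S, G.IsNClique (a + 1) T) ∨ ∃ T ⊆ S, G.IsNIndepSet (b + 1) T := by
  classical
  have hnonempty {a b : ℕ} {S : Finset V} (hS : (a + b).choose a ≤ #S) : S.Nonempty :=
    Finset.card_pos.mp ((Nat.choose_pos (Nat.le_add_right a b)).trans_le hS)
  induction a generalizing b S with
  | zero =>
    obtain ⟨v, hv⟩ := hnonempty hS
    exact .inl ⟨{v}, by simpa using hv, by simp⟩
  | succ a iha =>
    induction b generalizing S with
    | zero =>
      obtain ⟨v, hv⟩ := hnonempty hS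
      exact .inr ⟨{v}, by simpa using hv, by simp [isNIndepSet_iff]⟩
    | succ b ihb =>
      obtain ⟨v, hv⟩ := hnonempty hS
      set A := {w ∈ S.erase v | G.Adj v w}
      set B := {w ∈ S.erase v | ¬ G.Adj v w}
      have hAS : insert v A ⊆ S := by grind
      have hBS : insert v B ⊆ S := by grind
      have hcard : #A + #B + 1 = #S := by
        rw [Finset.card_filter_add_card_filter_not, Finset.card_erase_add_one hv]
      have hpascal : (a + 1 + (b + 1)).choose (a + 1)
          = (a + (b + 1)).choose a + (a + 1 + b).choose (a + 1) := by
        rw [← add_assoc (a + 1) b 1, Nat.choose_succ_succ', add_right_comm, add_assoc a b 1]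
      rcases le_or_gt ((a + (b + 1)).choose a) #A with hle | hlt
      · refine (iha hle).imp ?_ ?_
        · rintro ⟨T, hTA, hT⟩
          exact ⟨insert v T, by grind, hT.insert fun w hw ↦ by grind⟩
        · rintro ⟨T, hTA, hT⟩
          exact ⟨T, by grind, hT⟩
      · have hle : (a + 1 + b).choose (a + 1) ≤ #B := by omega
        refine (ihb hle).imp ?_ ?_
        · rintro ⟨T, hTB, hT⟩
          exact ⟨T, by grind, hT⟩
        · rintro ⟨T, hTB, hT⟩
          exact ⟨insert v T, by grind, (isNClique_compl G).mp
            (((isNClique_compl G).mpr hT).insert fun w hw ↦ by grind [compl_adj])⟩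

end Ramsey

section Turan

theorem one_sub_one_div_mul_choose_two_le_card_edgeFinset_turanGraph (n r : ℕ) :
    (1 - 1 / (r : ℝ)) * n.choose 2 ≤ #(turanGraph n r).edgeFinset := by
  have hle_one : 1 - 1 / (r : ℝ) ≤ 1 := sub_le_self _ (by positivity)
  induction n using Nat.strong_induction_on with
  | _ n ih =>
    by_cases h : r = 0 ∨ n ≤ r
    · have hcard : #(turanGraph n r).edgeFinset = n.choose 2 := by
        convert card_edgeFinset_top_eq_card_choose_two (V := Fin n)
        · exact turanGraph_eq_top.mpr h
        · exact (Fintype.card_fin n).symm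
      rw [hcard]
      exact mul_le_of_le_one_left (Nat.cast_nonneg _) hle_one
    · push Not at h
      obtain ⟨m, rfl⟩ := Nat.exists_eq_add_of_le' h.2.le
      have hr : (r : ℝ) ≠ 0 := mod_cast h.1
      have hsplit : (1 - 1 / (r : ℝ)) * (m + r).choose 2
          = (1 - 1 / (r : ℝ)) * m.choose 2 + m * (r - 1) + (1 - 1 / (r : ℝ)) * r.choose 2 := by
        rw [Nat.cast_choose_two, Nat.cast_choose_two, Nat.cast_choose_two, Nat.cast_add]
        field_simp
        ring
      have hr_part : (1 - 1 / (r : ℝ)) * r.choose 2 ≤ r.choose 2 :=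
        mul_le_of_le_one_left (Nat.cast_nonneg _) hle_one
      have hm_part := ih m (Nat.lt_add_of_pos_right (Nat.pos_of_ne_zero h.1))
      rw [card_edgeFinset_turanGraph_add, hsplit]
      push_cast [Nat.one_le_iff_ne_zero.mpr h.1]
      linarith

theorem turanGraph_colorable (n : ℕ) {r : ℕ} (hr : 0 < r) : (turanGraph n r).Colorable r :=
  ⟨Coloring.mk (fun v ↦ ⟨v % r, Nat.mod_lt _ hr⟩) fun h heq ↦ h (by simpa using heq)⟩

end Turan

section Density

variable {W : Type*} {K : SimpleGraph W}

theorem card_edgeFinset_le_extremalNumber_add_minDegree {V : Type*} [Fintype V] [Nonempty V]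
    {G : SimpleGraph V} [DecidableRel G.Adj] (hG : K.Free G) :
    #G.edgeFinset ≤ extremalNumber (Fintype.card V - 1) K + G.minDegree := by
  classical
  obtain ⟨v, hv⟩ := G.exists_minimal_degree_vertex
  have hdel := card_edgeFinset_deleteIncidenceSet_le_extremalNumber hG v
  rw [G.card_edgeFinset_deleteIncidenceSet] at hdel
  omega

theorem extremalNumber_succ_le_add_of_minDegree {n : ℕ} {c : ℝ} (hc : 0 ≤ c)
    (h : ∀ {G : SimpleGraph (Fin (n + 1))} [DecidableRel G.Adj],
      c * (n + 1 : ℕ) ≤ G.minDegree → K ⊑ G) :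
    (extremalNumber (n + 1) K : ℝ) ≤ extremalNumber n K + c * (n + 1 : ℕ) := by
  have hle := extremalNumber_le_iff_of_nonneg (V := Fin (n + 1)) K
    (m := extremalNumber n K + c * (n + 1 : ℕ)) (by positivity)
  rw [Fintype.card_fin] at hle
  refine hle.mpr fun G _ hG ↦ ?_
  have hdeg : (G.minDegree : ℝ) < c * (n + 1 : ℕ) := not_le.mp (mt h hG)
  have hcard : (#G.edgeFinset : ℝ) ≤ extremalNumber n K + G.minDegree :=
    mod_cast (by simpa using card_edgeFinset_le_extremalNumber_add_minDegree hG)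
  linarith

theorem tendsto_natCast_div_choose_two :
    Tendsto (fun n : ℕ ↦ (n : ℝ) / n.choose 2) atTop (𝓝 0) := by
  have h : Tendsto (fun n : ℕ ↦ 2 / ((n : ℝ) - 1)) atTop (𝓝 0) :=
    (tendsto_atTop_add_const_right _ _ tendsto_natCast_atTop_atTop).const_div_atTop 2
  refine h.congr' ?_
  filter_upwards [eventually_ne_atTop 0] with n hn
  rw [Nat.cast_choose_two]
  field_simp

theorem turanDensity_le_of_eventually_minDegree {c : ℝ} (hc : 0 ≤ c)
    (h : ∀ᶠ n in atTop, ∀ {G : SimpleGraph (Fin n)} [DecidableRel G.Adj],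
      c * n ≤ G.minDegree → K ⊑ G) :
    turanDensity K ≤ c := by
  obtain ⟨N, hN⟩ := eventually_atTop.mp h
  have hbound : ∀ n ≥ N, (extremalNumber n K : ℝ) ≤ extremalNumber N K + c * (n + 1).choose 2 := by
    intro n hn
    induction n, hn using Nat.le_induction with
    | base => exact le_add_of_nonneg_right (by positivity)
    | succ n hn ih =>
      have hsucc := extremalNumber_succ_le_add_of_minDegree hc (hN (n + 1) (by omega))
      rw [Nat.choose_succ_succ' (n + 1) 1, Nat.choose_one_right, Nat.cast_add]
      linarith
  have hlim : Tendsto (fun n : ℕ ↦ c + (extremalNumber N K + c) * ((n : ℝ) / n.choose 2))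
      atTop (𝓝 c) := by
    simpa using (tendsto_natCast_div_choose_two.const_mul _).const_add c
  refine le_of_tendsto_of_tendsto (tendsto_turanDensity K) hlim ?_
  filter_upwards [eventually_ge_atTop N, eventually_ge_atTop 2] with n hn hn2
  have hpos : (0 : ℝ) < n.choose 2 := mod_cast Nat.choose_pos hn2
  rw [div_le_iff₀ hpos, add_mul, mul_assoc, div_mul_cancel₀ _ hpos.ne']
  have hpascal : ((n + 1).choose 2 : ℝ) = n + n.choose 2 := by
    rw [Nat.choose_succ_succ' n 1, Nat.choose_one_right, Nat.cast_add]
  have hone : (1 : ℝ) ≤ n := mod_cast (by omega : 1 ≤ n)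
  calc (extremalNumber n K : ℝ)
      ≤ extremalNumber N K + c * (n + 1).choose 2 := hbound n hn
    _ ≤ extremalNumber N K * n + c * (n + n.choose 2) := by
        rw [hpascal]
        gcongr
        exact le_mul_of_one_le_right (Nat.cast_nonneg _) hone
    _ = c * n.choose 2 + (extremalNumber N K + c) * n := by ring

theorem turanDensity_completeEquipartiteGraph_succ_le (r t : ℕ) :
    turanDensity (completeEquipartiteGraph (r + 1) t) ≤ 1 - 1 / (r : ℝ) :=
  le_of_forall_pos_le_add fun _ hε ↦ turanDensity_le_of_eventually_minDegree
    (add_nonneg (Nat.one_sub_one_div_cast_nonneg r) hε.le)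
    (eventually_completeEquipartiteGraph_isContained_of_minDegree hε r t)

end Density

section Containment

variable {α β V : Type*} {H : SimpleGraph α} {F : SimpleGraph β} {G : SimpleGraph V}

theorem isContained_of_isNClique [Finite α] {T : Finset V} {n : ℕ} (hT : G.IsNClique n T)
    (hn : Nat.card α ≤ n) : H ⊑ G := by
  have := Fintype.ofFinite α
  have hfree : ¬ (⊤ : SimpleGraph α).Free G := by
    rw [← cliqueFree_iff_top_free, ← Nat.card_eq_fintype_card]
    exact fun h ↦ hT.not_cliqueFree (h.mono hn)
  exact (IsContained.of_le le_top).trans (not_not.mp hfree)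

theorem isIndContained_of_isIndepSet_of_isCompleteBetween [Finite β] {ι : Type*} {c : β → ι}
    (hc : ∀ x y, F.Adj x y ↔ c x ≠ c y) {T : ι → Finset V} (hcard : ∀ i, Nat.card β ≤ #(T i))
    (hindep : ∀ i, G.IsIndepSet (T i))
    (hcomplete : Pairwise fun i j ↦ G.IsCompleteBetween (T i) (T j)) : F ⊴ G := by
  have := Fintype.ofFinite β
  have hemb : ∀ i, Nonempty (β ↪ T i) := fun i ↦ Function.Embedding.nonempty_of_card_le <| by
    simpa using hcard i
  let e i := (hemb i).some
  have hadj : ∀ {x y}, c x ≠ c y → G.Adj (e (c x) x) (e (c y) y) := fun hxy ↦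
    hcomplete hxy (e _ _).2 (e _ _).2
  refine ⟨⟨⟨fun x ↦ e (c x) x, fun x y hxy ↦ ?_⟩, fun {x y} ↦ ?_⟩⟩
  · have hcxy : c x = c y := not_not.mp fun hne ↦ (hadj hne).ne hxy
    have heq : (e (c x) x : V) = e (c y) y := hxy
    rw [hcxy] at heq
    exact (e (c y)).injective (Subtype.ext heq)
  · refine ⟨fun hG ↦ (hc x y).mpr fun hcxy ↦ ?_, fun hF ↦ hadj ((hc x y).mp hF)⟩
    exact hindep (c x) (e (c x) x).2 (hcxy ▸ (e (c y) y).2) hG.ne hG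

theorem isContained_or_isIndContained_of_completeEquipartiteGraph [Finite α] [Finite β] {k t : ℕ}
    {c : β → Fin k} (hc : ∀ x y, F.Adj x y ↔ c x ≠ c y)
    (ht : (Nat.card α + Nat.card β).choose (Nat.card α) ≤ t)
    (hK : completeEquipartiteGraph k t ⊑ G) : H ⊑ G ∨ F ⊴ G := by
  obtain ⟨f⟩ := hK
  let part (i : Fin k) : Finset V :=
    Finset.univ.map ((Function.Embedding.sectR i (Fin t)).trans f.toEmbedding)
  have hpart : Pairwise fun i j ↦ G.IsCompleteBetween (part i) (part j) := by
    intro i j hij x hx y hy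
    obtain ⟨a, -, rfl⟩ := Finset.mem_map.mp hx
    obtain ⟨b, -, rfl⟩ := Finset.mem_map.mp hy
    exact f.toHom.map_adj (completeEquipartiteGraph_adj.mpr hij)
  by_contra hne
  rw [not_or] at hne
  have hindep : ∀ i, ∃ T ⊆ part i, G.IsNIndepSet (Nat.card β + 1) T := fun i ↦
    (exists_isNClique_or_isNIndepSet_of_choose_le_card G (by simpa [part] using ht)).resolve_left
      fun ⟨_, _, hT⟩ ↦ hne.1 (isContained_of_isNClique hT (Nat.le_succ _))
  choose T hTpart hT using hindep
  refine hne.2 (isIndContained_of_isIndepSet_of_isCompleteBetween hc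
    (fun i ↦ by simp [(hT i).card_eq]) (fun i ↦ (hT i).isIndepSet) fun i j hij ↦ ?_)
  exact fun x hx y hy ↦ hpart hij (hTpart i hx) (hTpart j hy)

end Containment

theorem containsCopy_iff_isContained {α β : Type*} {H : SimpleGraph α} {G : SimpleGraph β} :
    ContainsCopy H G ↔ H ⊑ G :=
  ⟨fun ⟨f, hf⟩ ↦ ⟨⟨f, hf⟩⟩, fun ⟨f⟩ ↦ ⟨f.toHom, f.injective⟩⟩

theorem IsCompleteMultipartiteWith.not_colorable {β : Type*} {F : SimpleGraph β} {s k : ℕ}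
    (hF : IsCompleteMultipartiteWith F k) (hsk : s < k) : ¬ F.Colorable s := by
  obtain ⟨f, hf, hadj⟩ := hF
  intro hcol
  have hle : Nat.card (Fin k) ≤ s := hcol.card_le_of_pairwise_adj (Function.surjInv hf)
    fun i j hij ↦ (hadj _ _).mpr (by simpa only [Function.surjInv_eq hf] using hij)
  exact hsk.not_ge (by simpa using hle)

section InducedTuranNumber

variable {α β : Type*} {H : SimpleGraph α} {F : SimpleGraph β} {n m : ℕ}

theorem inducedTuranNumber_le_of_forall
    (h : ∀ G : SimpleGraph (Fin n), H.Free G → ¬ F ⊴ G → G.edgeSet.ncard ≤ m) :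
    inducedTuranNumber H F n ≤ m := by
  refine csSup_le' ?_
  rintro _ ⟨G, hH, hF, rfl⟩
  exact h G (mt containsCopy_iff_isContained.mpr hH) hF

theorem ncard_edgeSet_le_inducedTuranNumber {G : SimpleGraph (Fin n)} (hH : H.Free G)
    (hF : ¬ F ⊴ G) : G.edgeSet.ncard ≤ inducedTuranNumber H F n := by
  refine le_csSup (((Set.finite_range fun G : SimpleGraph (Fin n) ↦ G.edgeSet.ncard).subset
    ?_).bddAbove) ⟨G, mt containsCopy_iff_isContained.mp hH, hF, rfl⟩
  rintro _ ⟨G, -, -, rfl⟩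
  exact ⟨G, rfl⟩

theorem card_edgeFinset_turanGraph_le_inducedTuranNumber {s : ℕ} (hs : 0 < s)
    (hH : ¬ H.Colorable s) (hF : ¬ F.Colorable s) (n : ℕ) :
    #(turanGraph n s).edgeFinset ≤ inducedTuranNumber H F n := by
  have hT := turanGraph_colorable n hs
  rw [← Set.ncard_coe_finset, coe_edgeFinset]
  exact ncard_edgeSet_le_inducedTuranNumber (fun ⟨f⟩ ↦ hH (hT.of_hom f.toHom))
    fun ⟨f⟩ ↦ hF (hT.of_hom f.toHom)

theorem inducedTuranNumber_le_extremalNumber [Finite α] [Finite β] {k : ℕ}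
    (hF : IsCompleteMultipartiteWith F k) {t : ℕ}
    (ht : (Nat.card α + Nat.card β).choose (Nat.card α) ≤ t) (n : ℕ) :
    inducedTuranNumber H F n ≤ extremalNumber n (completeEquipartiteGraph k t) := by
  classical
  obtain ⟨c, -, hc⟩ := hF
  refine inducedTuranNumber_le_of_forall fun G hHG hFG ↦ ?_
  have hfree : (completeEquipartiteGraph k t).Free G := fun hK ↦
    (isContained_or_isIndContained_of_completeEquipartiteGraph hc ht hK).elim hHG hFG
  simpa [← coe_edgeFinset, Set.ncard_coe_finset] using card_edgeFinset_le_extremalNumber hfree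

end InducedTuranNumber

theorem inducedTuran_asymptotics_of_completeMultipartite_general {α β : Type*} [Finite α] [Finite β]
    (H : SimpleGraph α) (F : SimpleGraph β) {s : ℕ} (hs : 1 ≤ s) (hH : ¬ H.Colorable s)
    (hF : IsCompleteMultipartiteWith F (s + 1)) :
    Tendsto (fun n : ℕ ↦ (inducedTuranNumber H F n : ℝ) / (n.choose 2 : ℝ))
      atTop (𝓝 (1 - 1 / (s : ℝ))) := by
  let K := completeEquipartiteGraph (s + 1) ((Nat.card α + Nat.card β).choose (Nat.card α))
  have hlower : ∀ᶠ n : ℕ in atTop,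
      1 - 1 / (s : ℝ) ≤ (inducedTuranNumber H F n : ℝ) / n.choose 2 := by
    filter_upwards [eventually_ge_atTop 2] with n hn
    rw [le_div_iff₀ (mod_cast Nat.choose_pos hn)]
    refine (one_sub_one_div_mul_choose_two_le_card_edgeFinset_turanGraph n s).trans ?_
    exact mod_cast card_edgeFinset_turanGraph_le_inducedTuranNumber hs hH
      (hF.not_colorable s.lt_succ_self) n
  have hupper (n : ℕ) : (inducedTuranNumber H F n : ℝ) / n.choose 2
      ≤ (extremalNumber n K : ℝ) / n.choose 2 := by
    gcongr
    exact inducedTuranNumber_le_extremalNumber hF le_rfl n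
  refine tendsto_order.mpr ⟨fun a ha ↦ hlower.mono fun n hn ↦ ha.trans_le hn, fun a ha ↦ ?_⟩
  have hK : turanDensity K < a := (turanDensity_completeEquipartiteGraph_succ_le s _).trans_lt ha
  exact ((tendsto_turanDensity K).eventually_lt_const hK).mono fun n hn ↦ (hupper n).trans_lt hn

/-- If `χ(H) = r+1`, `χ(F) = s+1`, `r > s ≥ 1`, and `F` is complete `(s+1)`-partite, then
`ex(n, {H, F-ind}) = (1 - 1/s + o(1)) * C(n,2)`. -/
theorem inducedTuran_asymptotics_of_completeMultipartite
    {α β : Type*} [Fintype α] [Fintype β] (H : SimpleGraph α) (F : SimpleGraph β)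
    (r s : ℕ) (hs : 1 ≤ s) (hsr : s < r)
    (hH : H.chromaticNumber = (r + 1 : ℕ)) (hF : F.chromaticNumber = (s + 1 : ℕ))
    (hFmp : IsCompleteMultipartiteWith F (s + 1)) :
    Filter.Tendsto (fun n : ℕ => (inducedTuranNumber H F n : ℝ) / (n.choose 2 : ℝ))
      Filter.atTop (nhds (1 - 1 / (s : ℝ))) :=
  inducedTuran_asymptotics_of_completeMultipartite_general H F hs
    (fun h ↦ (chromaticNumber_eq_iff_colorable_not_colorable.mp hH).2 (h.mono hsr.le)) hFmp
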